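/- arXiv:1701.06597 — 2 statements merged into one kernel-verified Lean document; each statement's English description precedes it below -/
import Mathlib

section
/- Let p, s, b be positive integers with b dividing both s and p, and let D ⊆ ℝ^{2p} be the set of vectors t = [t₁; t₂] whose halves t₁, t₂ ∈ ℝ^p are each (s,b) block-sparse. Let F : ℝ^{2p} → ℝ be twice continuously differentiable and suppose F satisfies SRSC/SRSS at level 6s with constants 0 < m ≤ M: for every t ∈ ℝ^{2p} and every index set ξ that is a union of the supports of three elements of D, one has m‖v‖₂² ≤ ⟨v, ∇²F(t) v⟩ ≤ M‖v‖₂² for all v ∈ ℝ^{2p} supported on ξ. Fix a step size η with 1/(2M) < η < 3/(2m), set ρ = 2·√(1 + η²M² − 2ηm), and assume ρ < 1. Let θ ∈ D and let (t^k) be any sequence with t^0 ∈ D and t^{k+1} a Euclidean-norm best approximation in D of t^k − η∇F(t^k). Then for every k ≥ 0, ‖t^k − θ‖₂ ≤ ρ^k ‖t^0 − θ‖₂ + (2η/(1−ρ)) · G, where G is the maximum over index sets J of size at most 6s of ‖(∇F(θ))restricted to J‖₂. -/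
open scoped RealInnerProductSpace

/-- `(v)` restricted to `J`: the vector agreeing with `v` on `J` and zero elsewhere. -/
noncomputable def restrictTo {ι : Type*} [Fintype ι] [DecidableEq ι] (J : Finset ι)
    (v : EuclideanSpace ℝ ι) : EuclideanSpace ℝ ι :=
  (WithLp.equiv 2 _).symm (fun i => if i ∈ J then v i else 0)

/-- `u ∈ ℝ^p` is `(s,b)` block-sparse: with coordinates partitioned into consecutive
blocks of length `b`, the support of `u` is contained in a union of at most `s/b` blocks. -/
def BlockSparse (p s b : ℕ) (u : EuclideanSpace ℝ (Fin p)) : Prop :=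
  ∃ S : Finset ℕ, S.card ≤ s / b ∧ ∀ i : Fin p, u i ≠ 0 → (i : ℕ) / b ∈ S

/-- The set `D ⊆ ℝ^{2p}` of vectors `t = [t₁; t₂]` whose halves are each
`(s,b)` block-sparse. -/
noncomputable def blockSparsePairs (p s b : ℕ) : Set (EuclideanSpace ℝ (Fin p ⊕ Fin p)) :=
  {t | BlockSparse p s b ((WithLp.equiv 2 _).symm (fun i => t (Sum.inl i))) ∧
       BlockSparse p s b ((WithLp.equiv 2 _).symm (fun i => t (Sum.inr i)))}

/-!
If a subspace `K` contains the current iterate, the next iterate and `θ`, then projecting onto `K`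
turns the gradient step of `F` into the gradient step of the restriction `F|_K`, whose Hessian lies
between `m` and `M` on all of `K`. There the mean value inequality makes `x ↦ x - η ∇F(x)` Lipschitz
with constant `√(1 + η²M² - 2ηm)`. Best approximation in `D` costs a factor `2`, because by
Pythagoras the next iterate is no farther than `θ` from the projected gradient step. This gives
`‖t (k + 1) - θ‖ ≤ ρ ‖t k - θ‖ + 2ηG`, which is iterated.
-/

open scoped Gradient

theorem le_pow_mul_add_div_of_le_mul_add {a : ℕ → ℝ} {ρ c : ℝ} (hρ₀ : 0 ≤ ρ) (hρ₁ : ρ < 1)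
    (hc : 0 ≤ c) (ha : ∀ k, a (k + 1) ≤ ρ * a k + c) (k : ℕ) :
    a k ≤ ρ ^ k * a 0 + c / (1 - ρ) := by
  have h1ρ : 0 < 1 - ρ := sub_pos.2 hρ₁
  set r := c / (1 - ρ) with hr
  have hfix : ρ * r + c = r := by rw [hr]; field_simp; ring
  have hr₀ : 0 ≤ r := div_nonneg hc h1ρ.le
  have hgeom : a k - r ≤ ρ ^ k * (a 0 - r) :=
    le_geom (u := fun j ↦ a j - r) hρ₀ k fun j _ ↦ by linarith [ha j]
  have hpow : 0 ≤ ρ ^ k * r := mul_nonneg (pow_nonneg hρ₀ k) hr₀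
  linarith

section InnerProductSpace

variable {E : Type*} [NormedAddCommGroup E] [InnerProductSpace ℝ E]

theorem norm_sq_apply_le_mul_inner {A : E →ₗ[ℝ] E} (hA : A.IsSymmetric)
    (hA₀ : ∀ v, 0 ≤ ⟪v, A v⟫) {M : ℝ} (hM : ∀ v, ⟪v, A v⟫ ≤ M * ‖v‖ ^ 2) (v : E) :
    ‖A v‖ ^ 2 ≤ M * ⟪v, A v⟫ := by
  obtain hAv | hAv := (norm_nonneg (A v)).eq_or_lt'
  · simp [norm_eq_zero.1 hAv]
  -- Cauchy-Schwarz for the semi-inner product `⟪u, A w⟫`, at the vectors `v` and `A v`.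
  have hCS : (‖A v‖ ^ 2) ^ 2 ≤ ⟪v, A v⟫ * ⟪A v, A (A v)⟫ := by
    have h := LinearMap.BilinForm.apply_sq_le_of_symm ((innerₗ E).compl₂ A) hA₀
      ⟨fun u w ↦ by simp [← hA u w, real_inner_comm]⟩ v (A v)
    simpa [← hA v (A v), real_inner_self_eq_norm_sq] using h
  refine le_of_mul_le_mul_right ?_ (pow_pos hAv 2)
  calc ‖A v‖ ^ 2 * ‖A v‖ ^ 2 = (‖A v‖ ^ 2) ^ 2 := (sq _).symm
    _ ≤ ⟪v, A v⟫ * ⟪A v, A (A v)⟫ := hCS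
    _ ≤ ⟪v, A v⟫ * (M * ‖A v‖ ^ 2) := mul_le_mul_of_nonneg_left (hM _) (hA₀ v)
    _ = M * ⟪v, A v⟫ * ‖A v‖ ^ 2 := by ring

theorem norm_sub_smul_apply_le {A : E →ₗ[ℝ] E} (hA : A.IsSymmetric) {m M η : ℝ} (hm : 0 ≤ m)
    (hmM : m ≤ M) (hη : 0 ≤ η) (hbounds : ∀ v, m * ‖v‖ ^ 2 ≤ ⟪v, A v⟫ ∧ ⟪v, A v⟫ ≤ M * ‖v‖ ^ 2)
    (v : E) : ‖v - η • A v‖ ≤ √(1 + η ^ 2 * M ^ 2 - 2 * η * m) * ‖v‖ := by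
  have hAv : ‖A v‖ ^ 2 ≤ M ^ 2 * ‖v‖ ^ 2 :=
    calc ‖A v‖ ^ 2 ≤ M * ⟪v, A v⟫ :=
          norm_sq_apply_le_mul_inner hA
            (fun u ↦ (by positivity : 0 ≤ m * ‖u‖ ^ 2).trans (hbounds u).1)
            (fun u ↦ (hbounds u).2) v
      _ ≤ M * (M * ‖v‖ ^ 2) := mul_le_mul_of_nonneg_left (hbounds v).2 (hm.trans hmM)
      _ = M ^ 2 * ‖v‖ ^ 2 := by ring
  have hsq : ‖v - η • A v‖ ^ 2 ≤ (1 + η ^ 2 * M ^ 2 - 2 * η * m) * ‖v‖ ^ 2 :=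
    calc ‖v - η • A v‖ ^ 2 = ‖v‖ ^ 2 - 2 * η * ⟪v, A v⟫ + η ^ 2 * ‖A v‖ ^ 2 := by
          rw [norm_sub_sq_real, inner_smul_right, norm_smul, mul_pow, Real.norm_eq_abs, sq_abs]
          ring
      _ ≤ ‖v‖ ^ 2 - 2 * η * (m * ‖v‖ ^ 2) + η ^ 2 * (M ^ 2 * ‖v‖ ^ 2) := by
          gcongr
          exact (hbounds v).1
      _ = (1 + η ^ 2 * M ^ 2 - 2 * η * m) * ‖v‖ ^ 2 := by ring
  simpa [Real.sqrt_mul' _ (sq_nonneg ‖v‖)] using Real.le_sqrt_of_sq_le hsq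

theorem norm_sub_starProjection_le_of_norm_sub_le {K : Submodule ℝ E} [K.HasOrthogonalProjection]
    {x y z : E} (hy : y ∈ K) (hz : z ∈ K) (h : ‖y - x‖ ≤ ‖z - x‖) :
    ‖y - K.starProjection x‖ ≤ ‖z - K.starProjection x‖ := by
  have pythagoras : ∀ u ∈ K,
      ‖u - x‖ ^ 2 = ‖u - K.starProjection x‖ ^ 2 + ‖Kᗮ.starProjection x‖ ^ 2 := fun u hu ↦ by
    rw [K.norm_sq_eq_add_norm_sq_starProjection, map_sub, map_sub,
      Submodule.starProjection_eq_self_iff.2 hu,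
      (Kᗮ.starProjection_apply_eq_zero_iff).2 (K.le_orthogonal_orthogonal hu), zero_sub, norm_neg]
  have hsq := pow_le_pow_left₀ (norm_nonneg _) h 2
  rw [pythagoras y hy, pythagoras z hz] at hsq
  exact (sq_le_sq₀ (norm_nonneg _) (norm_nonneg _)).1 (le_of_add_le_add_right hsq)

end InnerProductSpace

section Gradient

variable {E E' : Type*} [NormedAddCommGroup E] [InnerProductSpace ℝ E] [CompleteSpace E]
  [NormedAddCommGroup E'] [InnerProductSpace ℝ E'] [CompleteSpace E'] {F : E → ℝ}

theorem differentiable_gradient (hF : ContDiff ℝ 2 F) : Differentiable ℝ (∇ F) :=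
  (InnerProductSpace.toDual ℝ E).symm.toContinuousLinearEquiv.differentiable.comp <|
    (hF.fderiv_right (m := 1) (by norm_num)).differentiable one_ne_zero

theorem inner_fderiv_gradient (x u v : E) :
    ⟪fderiv ℝ (∇ F) x u, v⟫ = fderiv ℝ (fderiv ℝ F) x u v := by
  rw [← toDual_comp_gradient]
  exact congr($((InnerProductSpace.toDual ℝ E).toContinuousLinearEquiv.comp_fderiv.symm) u v)

theorem isSymmetric_fderiv_gradient {x : E} (hF : ContDiffAt ℝ 2 F x) :
    (fderiv ℝ (∇ F) x : E →ₗ[ℝ] E).IsSymmetric := fun u v ↦ by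
  have hsymm : IsSymmSndFDerivAt ℝ F x := hF.isSymmSndFDerivAt (by simp)
  simp only [ContinuousLinearMap.coe_coe]
  rw [real_inner_comm _ u, inner_fderiv_gradient, inner_fderiv_gradient, hsymm u v]

theorem gradient_comp_continuousLinearMap (L : E' →L[ℝ] E) {x : E'}
    (hF : DifferentiableAt ℝ F (L x)) : ∇ (F ∘ L) x = L.adjoint (∇ F (L x)) := by
  refine ext_inner_right ℝ fun v ↦ ?_
  rw [inner_gradient_left, fderiv_comp x hF L.differentiableAt, L.fderiv,
    ContinuousLinearMap.adjoint_inner_left, inner_gradient_left]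
  rfl

theorem fderiv_gradient_comp_continuousLinearMap (hF : ContDiff ℝ 2 F) (L : E' →L[ℝ] E)
    (x v : E') : fderiv ℝ (∇ (F ∘ L)) x v = L.adjoint (fderiv ℝ (∇ F) (L x) (L v)) := by
  have hgrad : ∇ (F ∘ L) = fun y ↦ L.adjoint (∇ F (L y)) := funext fun y ↦
    gradient_comp_continuousLinearMap L (hF.differentiable two_ne_zero _)
  have hderiv := L.adjoint.hasFDerivAt.comp x <|
    (differentiable_gradient hF (L x)).hasFDerivAt.comp x L.hasFDerivAt
  rw [hgrad]
  exact congr($(hderiv.fderiv) v)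

theorem norm_gradientStep_sub_gradientStep_le (hF : ContDiff ℝ 2 F) {m M η : ℝ} (hm : 0 ≤ m)
    (hmM : m ≤ M) (hη : 0 ≤ η)
    (hbounds : ∀ x v, m * ‖v‖ ^ 2 ≤ ⟪v, fderiv ℝ (∇ F) x v⟫ ∧
      ⟪v, fderiv ℝ (∇ F) x v⟫ ≤ M * ‖v‖ ^ 2) (x y : E) :
    ‖(x - η • ∇ F x) - (y - η • ∇ F y)‖ ≤ √(1 + η ^ 2 * M ^ 2 - 2 * η * m) * ‖x - y‖ := by
  refine convex_univ.norm_image_sub_le_of_norm_hasFDerivWithin_le (𝕜 := ℝ)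
    (f := fun z ↦ z - η • ∇ F z)
    (f' := fun z ↦ ContinuousLinearMap.id ℝ E - η • fderiv ℝ (∇ F) z)
    (fun z _ ↦ ((hasFDerivAt_id z).sub
      ((differentiable_gradient hF z).hasFDerivAt.const_smul η)).hasFDerivWithinAt)
    (fun z _ ↦ ContinuousLinearMap.opNorm_le_bound _ (Real.sqrt_nonneg _) fun v ↦ ?_)
    (Set.mem_univ y) (Set.mem_univ x)
  exact norm_sub_smul_apply_le (isSymmetric_fderiv_gradient hF.contDiffAt) hm hmM hη (hbounds z) v

/-- The SRSC/SRSS condition with constants `m` and `M` on a single subspace `K`: the quadratic form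
of the Hessian of `F` lies between `m‖v‖²` and `M‖v‖²` on `K`. The Hessian is encoded as the
derivative of the gradient, and is only evaluated at points of `K`. -/
def HessianBoundsOn (F : E → ℝ) (m M : ℝ) (K : Submodule ℝ E) : Prop :=
  ∀ x ∈ K, ∀ v ∈ K,
    m * ‖v‖ ^ 2 ≤ ⟪v, fderiv ℝ (∇ F) x v⟫ ∧ ⟪v, fderiv ℝ (∇ F) x v⟫ ≤ M * ‖v‖ ^ 2

namespace HessianBoundsOn

variable {m M η : ℝ} {K : Submodule ℝ E} [CompleteSpace K]

theorem norm_starProjection_gradientStep_sub_le (hK : HessianBoundsOn F m M K)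
    (hF : ContDiff ℝ 2 F) (hm : 0 ≤ m) (hmM : m ≤ M) (hη : 0 ≤ η) {x y : E} (hx : x ∈ K)
    (hy : y ∈ K) :
    ‖K.starProjection (x - η • ∇ F x) - y‖ ≤
      √(1 + η ^ 2 * M ^ 2 - 2 * η * m) * ‖x - y‖ + η * ‖K.starProjection (∇ F y)‖ := by
  have hgrad (z : K) : ((∇ (F ∘ K.subtypeL) z : K) : E) = K.starProjection (∇ F z) := by
    rw [gradient_comp_continuousLinearMap _ (hF.differentiable two_ne_zero _),
      K.adjoint_subtypeL]
    rfl
  have hbounds (z v : K) :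
      m * ‖v‖ ^ 2 ≤ ⟪v, fderiv ℝ (∇ (F ∘ K.subtypeL)) z v⟫ ∧
        ⟪v, fderiv ℝ (∇ (F ∘ K.subtypeL)) z v⟫ ≤ M * ‖v‖ ^ 2 := by
    rw [fderiv_gradient_comp_continuousLinearMap hF, ContinuousLinearMap.adjoint_inner_right]
    exact hK z z.2 v v.2
  have hlip : ‖(x - η • K.starProjection (∇ F x)) - (y - η • K.starProjection (∇ F y))‖ ≤
      √(1 + η ^ 2 * M ^ 2 - 2 * η * m) * ‖x - y‖ := by
    have h := norm_gradientStep_sub_gradientStep_le (hF.comp K.subtypeL.contDiff) hm hmM hη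
      hbounds ⟨x, hx⟩ ⟨y, hy⟩
    simpa only [Submodule.coe_norm, Submodule.coe_sub, Submodule.coe_smul, hgrad] using h
  calc ‖K.starProjection (x - η • ∇ F x) - y‖
      = ‖(x - η • K.starProjection (∇ F x)) - (y - η • K.starProjection (∇ F y))
          - η • K.starProjection (∇ F y)‖ := by
        rw [map_sub, map_smul, Submodule.starProjection_eq_self_iff.2 hx]
        congr 1
        abel
    _ ≤ ‖(x - η • K.starProjection (∇ F x)) - (y - η • K.starProjection (∇ F y))‖
          + ‖η • K.starProjection (∇ F y)‖ := norm_sub_le _ _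
    _ ≤ √(1 + η ^ 2 * M ^ 2 - 2 * η * m) * ‖x - y‖ + η * ‖K.starProjection (∇ F y)‖ := by
        rw [norm_smul, Real.norm_of_nonneg hη]
        gcongr

theorem norm_sub_le_of_norm_sub_gradientStep_le (hK : HessianBoundsOn F m M K)
    (hF : ContDiff ℝ 2 F) (hm : 0 ≤ m) (hmM : m ≤ M) (hη : 0 ≤ η) {x x' y : E} (hx : x ∈ K)
    (hx' : x' ∈ K) (hy : y ∈ K) (hbest : ‖x' - (x - η • ∇ F x)‖ ≤ ‖y - (x - η • ∇ F x)‖) :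
    ‖x' - y‖ ≤ 2 * √(1 + η ^ 2 * M ^ 2 - 2 * η * m) * ‖x - y‖ +
      2 * η * ‖K.starProjection (∇ F y)‖ := by
  have hstep := hK.norm_starProjection_gradientStep_sub_le hF hm hmM hη hx hy
  have hproj := norm_sub_starProjection_le_of_norm_sub_le hx' hy hbest
  rw [norm_sub_rev y] at hproj
  have htriangle := norm_sub_le_norm_sub_add_norm_sub x' (K.starProjection (x - η • ∇ F x)) y
  linarith

end HessianBoundsOn

theorem struct_dht_convergence_general {ι : Type*} (K : ι → Submodule ℝ E)
    [∀ i, CompleteSpace (K i)] {D : Set E}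
    (hDK : ∀ x ∈ D, ∀ y ∈ D, ∀ z ∈ D, ∃ i, x ∈ K i ∧ y ∈ K i ∧ z ∈ K i)
    (hF : ContDiff ℝ 2 F) {m M : ℝ} (hm : 0 ≤ m) (hmM : m ≤ M)
    (hSRSC : ∀ i, HessianBoundsOn F m M (K i)) {η : ℝ} (hη : 0 ≤ η) {ρ : ℝ}
    (hρdef : ρ = 2 * √(1 + η ^ 2 * M ^ 2 - 2 * η * m)) (hρ : ρ < 1) {θ : E} (hθ : θ ∈ D)
    {t : ℕ → E} (ht0 : t 0 ∈ D)
    (hstep : ∀ k, t (k + 1) ∈ D ∧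
      ∀ u ∈ D, ‖t (k + 1) - (t k - η • ∇ F (t k))‖ ≤ ‖u - (t k - η • ∇ F (t k))‖)
    {G : ℝ} (hG : ∀ i, ‖(K i).starProjection (∇ F θ)‖ ≤ G) (k : ℕ) :
    ‖t k - θ‖ ≤ ρ ^ k * ‖t 0 - θ‖ + 2 * η / (1 - ρ) * G := by
  have htD : ∀ k, t k ∈ D
    | 0 => ht0
    | k + 1 => (hstep k).1
  have hG₀ : 0 ≤ G := by
    obtain ⟨i, -⟩ := hDK θ hθ θ hθ θ hθ
    exact (norm_nonneg _).trans (hG i)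
  have hrec : ∀ k, ‖t (k + 1) - θ‖ ≤ ρ * ‖t k - θ‖ + 2 * η * G := fun k ↦ by
    obtain ⟨i, hk, hk', hθi⟩ := hDK _ (htD k) _ (htD (k + 1)) θ hθ
    rw [hρdef]
    refine ((hSRSC i).norm_sub_le_of_norm_sub_gradientStep_le hF hm hmM hη hk hk' hθi
      ((hstep k).2 θ hθ)).trans ?_
    gcongr
    exact hG i
  have hρ₀ : 0 ≤ ρ := by rw [hρdef]; positivity
  rw [div_mul_eq_mul_div]
  exact le_pow_mul_add_div_of_le_mul_add (a := fun k ↦ ‖t k - θ‖) hρ₀ hρ (by positivity) hrec k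

end Gradient

section Sparsity

variable {ι : Type*} [Fintype ι]

/-- The coordinate subspace of vectors supported on `J`. -/
def supportedOn (J : Finset ι) : Submodule ℝ (EuclideanSpace ℝ ι) where
  carrier := {v | ∀ i ∉ J, v i = 0}
  zero_mem' _ _ := rfl
  add_mem' hu hv i hi := by simp [hu i hi, hv i hi]
  smul_mem' c v hv i hi := by simp [hv i hi]

theorem starProjection_supportedOn [DecidableEq ι] (J : Finset ι) (v : EuclideanSpace ℝ ι) :
    (supportedOn J).starProjection v = restrictTo J v := by
  refine Submodule.eq_starProjection_of_mem_of_inner_eq_zero (fun i hi ↦ if_neg hi) fun w hw ↦ ?_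
  rw [PiLp.inner_apply]
  refine Finset.sum_eq_zero fun i _ ↦ ?_
  by_cases hi : i ∈ J
  · simp [restrictTo, hi]
  · simp [hw i hi]

/-- The support of a vector, as a finset of coordinates. -/
noncomputable def supportFinset (u : EuclideanSpace ℝ ι) : Finset ι := {i | u i ≠ 0}

theorem mem_supportFinset {u : EuclideanSpace ℝ ι} {i : ι} : i ∈ supportFinset u ↔ u i ≠ 0 := by
  simp [supportFinset]

theorem mem_supportedOn_iff_supportFinset_subset {u : EuclideanSpace ℝ ι} {J : Finset ι} :
    u ∈ supportedOn J ↔ supportFinset u ⊆ J :=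
  forall_congr' fun i ↦ by rw [mem_supportFinset, not_imp_comm]

variable {p s b : ℕ}

theorem BlockSparse.card_supportFinset_le (hb : 0 < b) {u : EuclideanSpace ℝ (Fin p)}
    (hu : BlockSparse p s b u) : (supportFinset u).card ≤ s := by
  obtain ⟨S, hS, hsupp⟩ := hu
  have hcard : (supportFinset u).card ≤ (S ×ˢ Finset.range b).card := by
    refine Finset.card_le_card_of_injOn (fun i : Fin p ↦ ((i : ℕ) / b, (i : ℕ) % b)) ?_ ?_
    · intro i hi
      have hui : u i ≠ 0 := mem_supportFinset.1 hi
      simp [hsupp i hui, Nat.mod_lt _ hb]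
    · intro i _ j _ hij
      obtain ⟨hdiv, hmod⟩ := Prod.mk.inj hij
      exact Fin.ext (by rw [← Nat.div_add_mod (i : ℕ) b, hdiv, hmod, Nat.div_add_mod])
  calc (supportFinset u).card ≤ S.card * b := by simpa using hcard
    _ ≤ s / b * b := Nat.mul_le_mul_right b hS
    _ ≤ s := Nat.div_mul_le_self s b

theorem card_supportFinset_le_of_mem_blockSparsePairs (hb : 0 < b)
    {t : EuclideanSpace ℝ (Fin p ⊕ Fin p)} (ht : t ∈ blockSparsePairs p s b) :
    (supportFinset t).card ≤ 2 * s := by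
  have hsplit : supportFinset t =
      (supportFinset ((WithLp.equiv 2 _).symm fun i ↦ t (Sum.inl i))).disjSum
        (supportFinset ((WithLp.equiv 2 _).symm fun i ↦ t (Sum.inr i))) := by
    ext (i | i) <;> simp [mem_supportFinset]
  rw [hsplit, Finset.card_disjSum, two_mul]
  exact add_le_add (ht.1.card_supportFinset_le hb) (ht.2.card_supportFinset_le hb)

theorem card_union_supportFinset_le_of_mem_blockSparsePairs (hb : 0 < b)
    {x y z : EuclideanSpace ℝ (Fin p ⊕ Fin p)} (hx : x ∈ blockSparsePairs p s b)
    (hy : y ∈ blockSparsePairs p s b) (hz : z ∈ blockSparsePairs p s b) :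
    (supportFinset x ∪ supportFinset y ∪ supportFinset z).card ≤ 6 * s := by
  have hcard {u : EuclideanSpace ℝ (Fin p ⊕ Fin p)} (hu : u ∈ blockSparsePairs p s b) :=
    card_supportFinset_le_of_mem_blockSparsePairs hb hu
  have hxyz := Finset.card_union_le (supportFinset x ∪ supportFinset y) (supportFinset z)
  have hxy := Finset.card_union_le (supportFinset x) (supportFinset y)
  linarith [hcard hx, hcard hy, hcard hz]

end Sparsity

theorem struct_dht_convergence
    (p s b : ℕ) (hp : 0 < p) (hs : 0 < s) (hb : 0 < b) (hbs : b ∣ s) (hbp : b ∣ p)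
    (F : EuclideanSpace ℝ (Fin p ⊕ Fin p) → ℝ) (hF : ContDiff ℝ 2 F)
    (m M : ℝ) (hm : 0 < m) (hmM : m ≤ M)
    -- SRSC/SRSS at level 6s: for every t and every ξ which is a union of
    -- the supports of three elements of D, and every v supported on ξ,
    -- m‖v‖² ≤ ⟨v, ∇²F(t) v⟩ ≤ M‖v‖².
    (hSRSC : ∀ (t d₁ d₂ d₃ : EuclideanSpace ℝ (Fin p ⊕ Fin p)),
      d₁ ∈ blockSparsePairs p s b → d₂ ∈ blockSparsePairs p s b →
      d₃ ∈ blockSparsePairs p s b →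
      ∀ v : EuclideanSpace ℝ (Fin p ⊕ Fin p),
        (∀ i, d₁ i = 0 → d₂ i = 0 → d₃ i = 0 → v i = 0) →
        m * ‖v‖ ^ 2 ≤ ⟪v, fderiv ℝ (gradient F) t v⟫ ∧
          ⟪v, fderiv ℝ (gradient F) t v⟫ ≤ M * ‖v‖ ^ 2)
    (η : ℝ) (hη₁ : 1 / (2 * M) < η) (hη₂ : η < 3 / (2 * m))
    (ρ : ℝ) (hρdef : ρ = 2 * Real.sqrt (1 + η ^ 2 * M ^ 2 - 2 * η * m)) (hρ : ρ < 1)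
    (θ : EuclideanSpace ℝ (Fin p ⊕ Fin p)) (hθ : θ ∈ blockSparsePairs p s b)
    (t : ℕ → EuclideanSpace ℝ (Fin p ⊕ Fin p))
    (ht0 : t 0 ∈ blockSparsePairs p s b)
    -- t^{k+1} is a Euclidean-norm best approximation in D of t^k − η∇F(t^k)
    (hstep : ∀ k : ℕ, t (k + 1) ∈ blockSparsePairs p s b ∧
      ∀ u ∈ blockSparsePairs p s b,
        ‖t (k + 1) - (t k - η • gradient F (t k))‖ ≤ ‖u - (t k - η • gradient F (t k))‖)
    -- G is the maximum over index sets J of size at most 6s of ‖(∇F(θ))|_J‖₂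
    (G : ℝ)
    (hG : IsGreatest {x : ℝ | ∃ J : Finset (Fin p ⊕ Fin p), J.card ≤ 6 * s ∧
      x = ‖restrictTo J (gradient F θ)‖} G) :
    ∀ k : ℕ, ‖t k - θ‖ ≤ ρ ^ k * ‖t 0 - θ‖ + (2 * η / (1 - ρ)) * G := by
  have hM : 0 < M := hm.trans_le hmM
  have hη : 0 < η := lt_trans (by positivity) hη₁
  let D := blockSparsePairs p s b
  let J (d : D × D × D) := supportFinset d.1.1 ∪ supportFinset d.2.1.1 ∪ supportFinset d.2.2.1
  have hJcard (d) : (J d).card ≤ 6 * s :=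
    card_union_supportFinset_le_of_mem_blockSparsePairs hb d.1.2 d.2.1.2 d.2.2.2
  have hD : ∀ x ∈ D, ∀ y ∈ D, ∀ z ∈ D,
      ∃ d, x ∈ supportedOn (J d) ∧ y ∈ supportedOn (J d) ∧ z ∈ supportedOn (J d) :=
    fun x hx y hy z hz ↦ ⟨(⟨x, hx⟩, ⟨y, hy⟩, ⟨z, hz⟩), by
      simp only [mem_supportedOn_iff_supportFinset_subset]; grind⟩
  have hHessian (d) : HessianBoundsOn F m M (supportedOn (J d)) := fun x _ v hv ↦
    hSRSC x _ _ _ d.1.2 d.2.1.2 d.2.2.2 v fun i h₁ h₂ h₃ ↦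
      hv i (by simp [J, mem_supportFinset, h₁, h₂, h₃])
  have hgradient (d) : ‖(supportedOn (J d)).starProjection (gradient F θ)‖ ≤ G :=
    starProjection_supportedOn (J d) (gradient F θ) ▸ hG.2 ⟨J d, hJcard d, rfl⟩
  exact struct_dht_convergence_general (fun d ↦ supportedOn (J d)) hD hF hm.le hmM hHessian hη.le
    hρdef hρ hθ ht0 hstep hgradient
end

section
/- Let 0 < m ≤ M be real numbers with M/m < 2/√3, and set η = m/M². Then 1/(2M) < η < 3/(2m) and 2·√(1 + η²M² − 2ηm) < 1. -/
/-! Completing the square gives `1 + η²M² - 2ηm = 1 - (m/M)² + (ηM - m/M)²`. The step size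
`η = m/M²` makes the last square vanish, hence minimises the convergence factor, which is then less
than `1` exactly when `(m/M)² > 3/4`, that is, when `M/m < 2/√3`. -/

section OrderedField

variable {K : Type*} [Field K] [LinearOrder K] [IsStrictOrderedRing K] {m M : K}

theorem one_div_two_mul_lt_div_sq_iff (hM : 0 < M) :
    1 / (2 * M) < m / M ^ 2 ↔ 1 / 2 < m / M := by
  rw [← div_div, sq, ← div_div, div_lt_div_iff_of_pos_right hM]

theorem div_sq_lt_three_div_two_mul_iff (hm : 0 < m) :
    m / M ^ 2 < 3 / (2 * m) ↔ (m / M) ^ 2 < 3 / 2 := by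
  rw [← div_div, lt_div_iff₀ hm, div_mul_eq_mul_div, ← sq, ← div_pow]

end OrderedField

theorem div_lt_div_sqrt_iff {a b c d : ℝ} (ha : 0 < a) (hb : 0 < b) (hc : 0 < c) (hd : 0 < d) :
    a / b < c / √d ↔ d / c ^ 2 < (b / a) ^ 2 := by
  calc a / b < c / √d
    _ ↔ √d / c < b / a := by rw [← inv_lt_inv₀ (by positivity) (by positivity), inv_div, inv_div]
    _ ↔ (√d / c) ^ 2 < (b / a) ^ 2 := (sq_lt_sq₀ (by positivity) (by positivity)).symm
    _ ↔ d / c ^ 2 < (b / a) ^ 2 := by rw [div_pow, Real.sq_sqrt hd.le]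

theorem one_add_sq_mul_sq_sub_eq {K : Type*} [Field K] {M : K} (hM : M ≠ 0) (m η : K) :
    1 + η ^ 2 * M ^ 2 - 2 * η * m = 1 - (m / M) ^ 2 + (η * M - m / M) ^ 2 := by
  field_simp
  ring

/-- The convergence factor `q = 2√(1 + η²M² - 2ηm)` of the iteration with step size `η`, as a
function of the constants `m` and `M`. `Real.sqrt` truncates negative radicands to `0`; the radicand
is nonnegative for every `η` when `0 < m ≤ M`. -/
noncomputable def convergenceFactor (m M η : ℝ) : ℝ :=
  2 * √(1 + η ^ 2 * M ^ 2 - 2 * η * m)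

theorem convergenceFactor_lt_one_iff {M : ℝ} (hM : M ≠ 0) (m η : ℝ) :
    convergenceFactor m M η < 1 ↔ 3 / 4 + (η * M - m / M) ^ 2 < (m / M) ^ 2 := by
  rw [convergenceFactor, one_add_sq_mul_sq_sub_eq hM, ← lt_div_iff₀' two_pos,
    Real.sqrt_lt' one_half_pos]
  constructor <;> intro h <;> linarith

theorem convergenceFactor_div_sq_lt_one_iff {M : ℝ} (hM : M ≠ 0) (m : ℝ) :
    convergenceFactor m M (m / M ^ 2) < 1 ↔ 3 / 4 < (m / M) ^ 2 := by
  have square_vanishes : m / M ^ 2 * M - m / M = 0 := by field_simp; ring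
  rw [convergenceFactor_lt_one_iff hM, square_vanishes, zero_pow two_ne_zero, add_zero]

theorem admissible_step_size
    (m M : ℝ) (hm : 0 < m) (hmM : m ≤ M) (hratio : M / m < 2 / Real.sqrt 3) :
    1 / (2 * M) < m / M ^ 2 ∧ m / M ^ 2 < 3 / (2 * m) ∧
      2 * Real.sqrt (1 + (m / M ^ 2) ^ 2 * M ^ 2 - 2 * (m / M ^ 2) * m) < 1 := by
  have hM : 0 < M := hm.trans_le hmM
  have ratio_pos : 0 < m / M := div_pos hm hM
  have ratio_le_one : m / M ≤ 1 := (div_le_one hM).mpr hmM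
  have ratio_sq_gt : 3 / 4 < (m / M) ^ 2 := by
    have h := (div_lt_div_sqrt_iff hM hm two_pos three_pos).mp hratio
    rwa [show (2 : ℝ) ^ 2 = 4 by norm_num] at h
  refine ⟨(one_div_two_mul_lt_div_sq_iff hM).mpr ?_, (div_sq_lt_three_div_two_mul_iff hm).mpr ?_,
    (convergenceFactor_div_sq_lt_one_iff hM.ne' m).mpr ratio_sq_gt⟩
  · exact lt_of_pow_lt_pow_left₀ 2 ratio_pos.le (by linarith)
  · linarith [pow_le_one₀ (n := 2) ratio_pos.le ratio_le_one]
end
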